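/- Define Φ₁: (0, 1/27) → ℝ by Φ₁(t) = log t + Σ_{k=1}^∞ ((−1)^k / k) · ((3k)! / (k!)³) · t^k (the series converges on this interval). For a differentiable function f let (Θf)(t) = t · f′(t). Then Φ₁ satisfies the Picard–Fuchs equation [Θ³ + 3t·Θ(3Θ+1)(3Θ+2)]Φ₁ = 0 on (0, 1/27); that is, for every t ∈ (0, 1/27), (Θ³Φ₁)(t) + 3t · (Θ(3Θ+1)(3Θ+2)Φ₁)(t) = 0, where (3Θ+1)f = 3Θf + f and (3Θ+2)f = 3Θf + 2f and the operators are composed left to right as written. -/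

import Mathlib

/-!
On `(0, 1/27)` every function that occurs has the form `α log t + β + ∑ c k t ^ (k + 1)` with
`|c k| ≤ C (k + 1) ^ n 27 ^ k`. Such expansions may be differentiated termwise, so `Θ` sends
`(α, β, c k)` to `(0, α, (k + 1) c k)`. Applied to the expansion `(1, 0, a k)` of `Φ₁`, the equation
becomes `a 0 + 6 = 0` together with the recurrence
`(k + 2)³ a (k + 1) + 3 (k + 1)(3k + 4)(3k + 5) a k = 0`, which is the ratio of
consecutive values of `(3m)! / (m!)³`. The same ratio, which is at most `27`, gives the growth bound.
-/

/-- The operator `Θ = t · d/dt`. -/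
noncomputable def ThetaOp (f : ℝ → ℝ) : ℝ → ℝ := fun t => t * deriv f t

/-- The logarithmic solution `Φ₁(t) = log t + Σ_{k≥1} ((−1)^k/k)((3k)!/(k!)³) t^k`
of the Picard–Fuchs equation of `K_{ℙ²}`. -/
noncomputable def PhiOne (t : ℝ) : ℝ :=
  Real.log t + ∑' k : ℕ,
    ((-1 : ℝ) ^ (k + 1) / (k + 1)) *
      ((Nat.factorial (3 * (k + 1)) : ℝ) / ((Nat.factorial (k + 1) : ℝ)) ^ 3) *
      t ^ (k + 1)

/-- `(3Θ + 2)Φ₁`. -/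
noncomputable def PFaux1 : ℝ → ℝ := fun u => 3 * ThetaOp PhiOne u + 2 * PhiOne u

/-- `(3Θ + 1)(3Θ + 2)Φ₁`. -/
noncomputable def PFaux2 : ℝ → ℝ := fun s => 3 * ThetaOp PFaux1 s + PFaux1 s

/-- Growth condition on coefficients: at most polynomial times `27 ^ k`. It guarantees convergence
of `∑ c k t ^ (k + 1)` for `|t| < 1/27` and is preserved by `c k ↦ (k + 1) c k`. -/
def PFGood (c : ℕ → ℝ) : Prop :=
  ∃ (C : ℝ) (n : ℕ), ∀ k : ℕ, |c k| ≤ C * (k + 1 : ℝ) ^ n * 27 ^ k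

/-- The function `α log t + β + ∑ c k t ^ (k + 1)`. -/
noncomputable def PFser (α β : ℝ) (c : ℕ → ℝ) (t : ℝ) : ℝ :=
  α * Real.log t + β + ∑' k : ℕ, c k * t ^ (k + 1)

/-- The coefficient of `t ^ (k + 1)` in `Φ₁`. -/
noncomputable def PFcoef (k : ℕ) : ℝ :=
  ((-1 : ℝ) ^ (k + 1) / (k + 1)) *
      ((Nat.factorial (3 * (k + 1)) : ℝ) / ((Nat.factorial (k + 1) : ℝ)) ^ 3)

lemma PFGood.mul {c : ℕ → ℝ} (hc : PFGood c) {q : ℕ → ℝ} (M : ℝ)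
    (hq : ∀ k : ℕ, |q k| ≤ M * (k + 1)) : PFGood (fun k => q k * c k) := by
  obtain ⟨C, n, h⟩ := hc
  refine ⟨M * C, n + 1, fun k => ?_⟩
  rw [abs_mul]
  calc |q k| * |c k| ≤ (M * (k + 1)) * (C * (k + 1 : ℝ) ^ n * 27 ^ k) :=
        mul_le_mul (hq k) (h k) (abs_nonneg _) ((abs_nonneg _).trans (hq k))
    _ = _ := by ring

lemma PFGood.mul_succ {c : ℕ → ℝ} (hc : PFGood c) : PFGood (fun k => (k + 1 : ℝ) * c k) :=
  hc.mul 1 fun k => by rw [abs_of_nonneg (by positivity), one_mul]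

lemma PFGood.mul_lin {c : ℕ → ℝ} (hc : PFGood c) {m : ℝ} (hm : 0 ≤ m) :
    PFGood (fun k => (3 * (k + 1 : ℝ) + m) * c k) :=
  hc.mul (3 + m) fun k => by
    rw [abs_of_nonneg (by positivity)]
    nlinarith [mul_nonneg hm (Nat.cast_nonneg (α := ℝ) k)]

lemma summable_majorant (C : ℝ) (n : ℕ) {r : ℝ} (h0 : 0 < r) (h1 : r < 1 / 27) :
    Summable fun k : ℕ => C * (k + 1 : ℝ) ^ n * 27 ^ k * r ^ k := by
  have h : Summable fun k : ℕ => (k : ℝ) ^ n * (27 * r) ^ k :=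
    summable_pow_mul_geometric_of_norm_lt_one n (by
      rw [Real.norm_eq_abs, abs_of_pos (by positivity)]; linarith)
  have h2 := ((summable_nat_add_iff 1).2 h).mul_left (C / (27 * r))
  refine h2.congr fun k => ?_
  push_cast
  rw [pow_succ (27 * r), mul_pow]
  field_simp

lemma PFGood.summable {c : ℕ → ℝ} (hc : PFGood c) {t : ℝ} (h0 : 0 < t) (h1 : t < 1 / 27) :
    Summable fun k : ℕ => c k * t ^ (k + 1) := by
  obtain ⟨C, n, h⟩ := hc
  refine Summable.of_norm_bounded ((summable_majorant C n h0 h1).mul_left t) fun k => ?_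
  rw [Real.norm_eq_abs, abs_mul, abs_of_pos (pow_pos h0 _), pow_succ]
  have := mul_le_mul_of_nonneg_right (h k) (pow_pos h0 k).le
  nlinarith

lemma PFGood.hasDerivAt {c : ℕ → ℝ} (hc : PFGood c) {t : ℝ} (h0 : 0 < t) (h1 : t < 1 / 27) :
    HasDerivAt (fun x => ∑' k : ℕ, c k * x ^ (k + 1))
      (∑' k : ℕ, c k * ((k + 1 : ℝ) * t ^ k)) t := by
  obtain ⟨C, n, h⟩ := hc.mul_succ
  -- A radius strictly between `t` and `1 / 27` makes the majorant of the derivatives uniform.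
  obtain ⟨r, hr1, hr2⟩ := exists_between h1
  have hr0 : 0 < r := h0.trans hr1
  refine hasDerivAt_tsum_of_isPreconnected (t := Set.Ioo 0 r)
    (g := fun k x => c k * x ^ (k + 1)) (g' := fun k x => c k * ((k + 1 : ℝ) * x ^ k))
    (summable_majorant C n hr0 hr2) isOpen_Ioo isPreconnected_Ioo ?_ ?_ (y₀ := t)
    ⟨h0, hr1⟩ (hc.summable h0 h1) ⟨h0, hr1⟩
  · intro k x _
    simpa using (hasDerivAt_pow (k + 1) x).const_mul (c k)
  · rintro k x ⟨hx0, hx1⟩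
    have e : c k * ((k + 1 : ℝ) * x ^ k) = ((k + 1 : ℝ) * c k) * x ^ k := by ring
    rw [e, Real.norm_eq_abs, abs_mul, abs_of_pos (pow_pos hx0 k)]
    exact mul_le_mul (h k) (pow_le_pow_left₀ hx0.le hx1.le k) (by positivity)
      ((abs_nonneg _).trans (h k))

/-- `Θ` acts on expansions by `(α, β, c k) ↦ (0, α, (k + 1) c k)`. -/
lemma theta_PFser {f : ℝ → ℝ} {α β : ℝ} {c : ℕ → ℝ} (hc : PFGood c)
    (hf : Set.EqOn f (PFser α β c) (Set.Ioo 0 (1 / 27))) :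
    Set.EqOn (ThetaOp f) (PFser 0 α (fun k => (k + 1 : ℝ) * c k)) (Set.Ioo 0 (1 / 27)) := by
  intro t ht
  have hd : HasDerivAt (PFser α β c) (α * t⁻¹ + ∑' k : ℕ, c k * ((k + 1 : ℝ) * t ^ k)) t :=
    (((Real.hasDerivAt_log ht.1.ne').const_mul α).add_const β).add (hc.hasDerivAt ht.1 ht.2)
  have he : f =ᶠ[nhds t] PFser α β c := hf.eventuallyEq_of_mem (isOpen_Ioo.mem_nhds ht)
  have h0 : t ≠ 0 := ht.1.ne'
  rw [ThetaOp, he.deriv_eq, hd.deriv, PFser, mul_add, ← tsum_mul_left]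
  congr 1
  · field_simp; ring
  · exact tsum_congr fun k => by ring

/-- The action of `3Θ + m` on expansions. -/
lemma lin_PFser {f : ℝ → ℝ} {α β m : ℝ} {c : ℕ → ℝ} (hc : PFGood c)
    (hf : Set.EqOn f (PFser α β c) (Set.Ioo 0 (1 / 27))) :
    Set.EqOn (fun u => 3 * ThetaOp f u + m * f u)
      (PFser (m * α) (3 * α + m * β) (fun k => (3 * (k + 1 : ℝ) + m) * c k))
      (Set.Ioo 0 (1 / 27)) := by
  intro t ht
  have hs := hc.summable ht.1 ht.2
  have hs' := hc.mul_succ.summable ht.1 ht.2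
  have e : ∑' k : ℕ, (3 * (k + 1 : ℝ) + m) * c k * t ^ (k + 1) =
      3 * ∑' k : ℕ, (k + 1 : ℝ) * c k * t ^ (k + 1) + m * ∑' k : ℕ, c k * t ^ (k + 1) := by
    rw [← tsum_mul_left, ← tsum_mul_left, ← (hs'.mul_left 3).tsum_add (hs.mul_left m)]
    exact tsum_congr fun k => by ring
  simp only [theta_PFser hc hf ht, hf ht, PFser, e]
  ring

lemma PFcoef_zero : PFcoef 0 = -6 := by
  norm_num [PFcoef, Nat.factorial]

lemma PFcoef_succ (k : ℕ) :
    (k + 2 : ℝ) ^ 3 * PFcoef (k + 1) =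
      -(3 * (k + 1) * (3 * (k + 1) + 1) * (3 * (k + 1) + 2) * PFcoef k) := by
  have e : 3 * (k + 1 + 1) = 3 * (k + 1) + 1 + 1 + 1 := by ring
  have hk : ((k + 1).factorial : ℝ) ≠ 0 := by positivity
  have h1 : (k + 1 : ℝ) ≠ 0 := by positivity
  have h2 : (k + 1 + 1 : ℝ) ≠ 0 := by positivity
  unfold PFcoef
  rw [e, Nat.factorial_succ (3 * (k + 1) + 1 + 1), Nat.factorial_succ (3 * (k + 1) + 1),
    Nat.factorial_succ (3 * (k + 1)), Nat.factorial_succ (k + 1)]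
  generalize (3 * (k + 1)).factorial = A
  generalize (k + 1).factorial = B at *
  push_cast
  field_simp
  ring

lemma PFcoef_good : PFGood PFcoef := by
  refine ⟨6, 0, fun k => ?_⟩
  induction k with
  | zero => norm_num [PFcoef_zero]
  | succ k ih =>
    have h := congrArg abs (PFcoef_succ k)
    rw [abs_neg, abs_mul, abs_mul, abs_of_nonneg (by positivity : (0 : ℝ) ≤ (k + 2 : ℝ) ^ 3),
      abs_of_nonneg (by positivity :
        (0 : ℝ) ≤ 3 * (k + 1) * (3 * (k + 1) + 1) * (3 * (k + 1) + 2))] at h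
    have hle : (3 * (k + 1) * (3 * (k + 1) + 1) * (3 * (k + 1) + 2) : ℝ) ≤
        27 * (k + 2 : ℝ) ^ 3 := by
      have : (0 : ℝ) ≤ k := k.cast_nonneg
      nlinarith [pow_nonneg this 2, pow_nonneg this 3]
    have hp : (0 : ℝ) < (k + 2 : ℝ) ^ 3 := by positivity
    have h3 : (k + 2 : ℝ) ^ 3 * |PFcoef (k + 1)| ≤ (k + 2 : ℝ) ^ 3 * (27 * |PFcoef k|) := by
      rw [h]
      nlinarith [mul_le_mul_of_nonneg_right hle (abs_nonneg (PFcoef k))]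
    have h4 := le_of_mul_le_mul_left h3 hp
    simp only [pow_zero, mul_one] at ih ⊢
    rw [pow_succ]
    linarith

/-- `Φ₁` satisfies the Picard–Fuchs equation
`[Θ³ + 3t·Θ(3Θ+1)(3Θ+2)]Φ₁ = 0` on `(0, 1/27)`, where `Θ = t·d/dt`. -/
theorem phiOne_satisfies_picard_fuchs :
    ∀ t ∈ Set.Ioo (0 : ℝ) (1 / 27),
      ThetaOp (ThetaOp (ThetaOp PhiOne)) t + 3 * t * ThetaOp PFaux2 t = 0 := by
  intro t ht
  have g := PFcoef_good
  have hΦ : Set.EqOn PhiOne (PFser 1 0 PFcoef) (Set.Ioo 0 (1 / 27)) := fun u _ => by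
    simp only [PhiOne, PFser, PFcoef]; ring
  have hA := theta_PFser g.mul_succ.mul_succ (theta_PFser g.mul_succ (theta_PFser g hΦ)) ht
  have g1 := g.mul_lin (m := 2) (by norm_num)
  have h1 : Set.EqOn PFaux1 _ (Set.Ioo 0 (1 / 27)) := lin_PFser (m := 2) g hΦ
  have g2 := g1.mul_lin (m := 1) (by norm_num)
  have h2 : Set.EqOn PFaux2 _ (Set.Ioo 0 (1 / 27)) := fun u hu => by
    have := lin_PFser (m := 1) g1 h1 hu
    simp only [one_mul] at this
    exact this
  have hB := theta_PFser (by simpa only [one_mul] using g2) h2 ht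
  have hs := g.mul_succ.mul_succ.mul_succ.summable ht.1 ht.2
  rw [hA, hB]
  simp only [PFser]
  -- Splitting off the `t` term aligns the remaining `t ^ (k + 2)` with the shifted second series.
  rw [hs.tsum_eq_zero_add, mul_add (3 * t), ← tsum_mul_left]
  have key : ∑' k : ℕ, ((k + 1 : ℕ) + 1 : ℝ) * (((k + 1 : ℕ) + 1 : ℝ) *
      (((k + 1 : ℕ) + 1 : ℝ) * PFcoef (k + 1))) * t ^ (k + 1 + 1) =
      -∑' k : ℕ, 3 * t * ((k + 1 : ℝ) * ((3 * (k + 1 : ℝ) + 1) *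
        ((3 * (k + 1 : ℝ) + 2) * PFcoef k)) * t ^ (k + 1)) := by
    rw [← tsum_neg]
    refine tsum_congr fun k => ?_
    push_cast
    linear_combination t ^ (k + 2) * PFcoef_succ k
  rw [key, PFcoef_zero]
  push_cast
  ring
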